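/- Fix an integer P ≥ 2 and let β ∈ (0, 1/2). There exists a constant C = C(β,P) such that for every real α with |α| ≥ 1, every δ ∈ (0,1], and every continuous f : [0,∞) → ℂ with ‖f‖_{β,δ,1} < ∞, the function φ(z) = −(1/(2|α|)) ∫₀^∞ ( e^{−|α||x−z|} − e^{−|α|(x+z)} ) f(x) dx, which is the decaying solution of φ'' − α²φ = f on (0,∞) with φ(0) = 0, satisfies the vanishing-at-the-boundary pointwise bound |α φ(z)| ≤ C (1 + |α|) · (z/(1+z)) · e^{−βz} · ‖f‖_{β,δ,1} for all z ≥ 0. -/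

import Mathlib

open scoped ENNReal

/-- The boundary-layer weight `W_{p,δ}(z) = 1 + Σ_{q=1}^{p} δ^{−q} (1 + (z/δ)^{P−1+q})^{−1}`. -/
noncomputable def wt (P p : ℕ) (δ z : ℝ) : ℝ :=
  1 + ∑ q ∈ Finset.Icc 1 p, (δ ^ q)⁻¹ * (1 + (z / δ) ^ (P - 1 + q))⁻¹

/-- The boundary-layer norm `‖ω‖_{β,δ,p} = sup_{z≥0} W_{p,δ}(z)^{−1} e^{βz}|ω(z)|`. -/
noncomputable def blNorm (P : ℕ) (β δ : ℝ) (p : ℕ) (ω : ℝ → ℂ) : ℝ≥0∞ :=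
  ⨆ z : Set.Ici (0:ℝ), ENNReal.ofReal ((wt P p δ z.1)⁻¹ * Real.exp (β * z.1) * ‖ω z.1‖)

/-- The Green's function solution
`φ(z) = −(1/(2α)) ∫₀^∞ ( e^{−α|x−z|} − e^{−α(x+z)} ) f(x) dx` of `φ'' − α²φ = f`, `φ(0)=0`. -/
noncomputable def greenSol (α : ℝ) (f : ℝ → ℂ) (z : ℝ) : ℂ :=
  -(1 / (2 * (α:ℂ))) * ∫ x in Set.Ici (0:ℝ),
    ((Real.exp (-(α * |x - z|)) - Real.exp (-(α * (x + z))) : ℝ) : ℂ) * f x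

/-!
The Green's function satisfies `G(z, x) ≤ e^{−a|x−z|} (1 − e^{−2az})`. Its second factor vanishes
at the boundary like `(1 + a) z/(1+z)`; its first turns the weight `e^{−βx}` of `f` into `e^{−βz}`
and still decays like `e^{−m|x−z|}` if `|β| + m ≤ a`. Integrating, the regular part of `f`
contributes `∫ e^{−m|x−z|} dx = 2/m`, while the boundary layer `δ⁻¹ (1 + (x/δ)^P)⁻¹` has an
integral over the half-line that does not depend on `δ` and is at most `π`.
-/

open MeasureTheory Real Set

/-- The Dirichlet Green's function `e^{−a|x−z|} − e^{−a(x+z)}` of `a² − ∂²` on the half-line,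
without its normalisation `1 / (2a)`. -/
noncomputable def greenKernel (a z x : ℝ) : ℝ :=
  exp (-(a * |x - z|)) - exp (-(a * (x + z)))

/-- The boundary-layer profile `δ⁻¹ (1 + (x/δ)^P)⁻¹`, the singular part of the weight
`W_{1,δ}`. -/
noncomputable def layerProfile (P : ℕ) (δ x : ℝ) : ℝ :=
  δ⁻¹ * (1 + (x / δ) ^ P)⁻¹

section Weight

variable {P p : ℕ} {β δ x : ℝ}

lemma layerProfile_nonneg (hδ : 0 < δ) (hx : 0 ≤ x) : 0 ≤ layerProfile P δ x := by
  unfold layerProfile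
  positivity

lemma wt_one_eq_one_add_layerProfile (hP : 1 ≤ P) (δ x : ℝ) :
    wt P 1 δ x = 1 + layerProfile P δ x := by
  simp [wt, layerProfile, Nat.sub_add_cancel hP]

lemma wt_pos (hδ : 0 < δ) (hx : 0 ≤ x) : 0 < wt P p δ x := by
  unfold wt
  positivity

lemma norm_le_of_blNorm_lt_top {ω : ℝ → ℂ} (hδ : 0 < δ) (hω : blNorm P β δ p ω < ⊤)
    (hx : 0 ≤ x) :
    ‖ω x‖ ≤ wt P p δ x * exp (-(β * x)) * (blNorm P β δ p ω).toReal := by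
  have hw : 0 < wt P p δ x := wt_pos hδ hx
  have weighted_le : (wt P p δ x)⁻¹ * exp (β * x) * ‖ω x‖ ≤ (blNorm P β δ p ω).toReal := by
    rw [← ENNReal.ofReal_le_iff_le_toReal hω.ne]
    exact le_iSup (fun z : Ici (0 : ℝ) ↦
      ENNReal.ofReal ((wt P p δ z.1)⁻¹ * exp (β * z.1) * ‖ω z.1‖)) ⟨x, hx⟩
  calc ‖ω x‖ = wt P p δ x * exp (-(β * x)) * ((wt P p δ x)⁻¹ * exp (β * x) * ‖ω x‖) := by
        rw [exp_neg]
        field_simp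
    _ ≤ wt P p δ x * exp (-(β * x)) * (blNorm P β δ p ω).toReal := by gcongr

end Weight

section Integrals

lemma one_add_pow_le_two_mul_one_add_pow {m n : ℕ} (hmn : m ≤ n) {y : ℝ} (hy : 0 ≤ y) :
    1 + y ^ m ≤ 2 * (1 + y ^ n) := by
  have hyn : 0 ≤ y ^ n := by positivity
  rcases le_total y 1 with hy1 | hy1
  · linarith [pow_le_one₀ (n := m) hy hy1]
  · linarith [pow_le_pow_right₀ hy1 hmn]

lemma inv_one_add_pow_le {m n : ℕ} (hmn : m ≤ n) {y : ℝ} (hy : 0 ≤ y) :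
    (1 + y ^ n)⁻¹ ≤ 2 * (1 + y ^ m)⁻¹ := by
  rw [← div_eq_mul_inv, le_div_iff₀ (by positivity), inv_mul_le_iff₀ (by positivity), mul_comm]
  exact one_add_pow_le_two_mul_one_add_pow hmn hy

lemma integrableOn_Ioi_inv_one_add_pow {P : ℕ} (hP : 2 ≤ P) :
    IntegrableOn (fun y : ℝ ↦ (1 + y ^ P)⁻¹) (Ioi 0) := by
  refine Integrable.mono' (integrable_inv_one_add_sq.const_mul 2).integrableOn
    (Measurable.aestronglyMeasurable (by fun_prop))
    (ae_restrict_of_forall_mem measurableSet_Ioi fun y hy ↦ ?_)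
  have hy0 : 0 ≤ y := le_of_lt hy
  rw [norm_of_nonneg (by positivity)]
  exact inv_one_add_pow_le hP hy0

lemma integral_Ioi_inv_one_add_pow_le_pi {P : ℕ} (hP : 2 ≤ P) :
    ∫ y in Ioi (0 : ℝ), (1 + y ^ P)⁻¹ ≤ π :=
  calc ∫ y in Ioi (0 : ℝ), (1 + y ^ P)⁻¹
      ≤ ∫ y in Ioi (0 : ℝ), 2 * (1 + y ^ 2)⁻¹ :=
        setIntegral_mono_on (integrableOn_Ioi_inv_one_add_pow hP)
          (integrable_inv_one_add_sq.const_mul 2).integrableOn measurableSet_Ioi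
          fun _ hy ↦ inv_one_add_pow_le hP (le_of_lt hy)
    _ = π := by
        rw [integral_const_mul, integral_Ioi_inv_one_add_sq, arctan_zero]
        ring

lemma integrableOn_Ici_layerProfile {P : ℕ} (hP : 2 ≤ P) {δ : ℝ} (hδ : 0 < δ) :
    IntegrableOn (layerProfile P δ) (Ici 0) := by
  rw [integrableOn_Ici_iff_integrableOn_Ioi]
  have rescaled : IntegrableOn (fun x : ℝ ↦ (1 + (x / δ) ^ P)⁻¹) (Ioi 0) := by
    simp only [div_eq_inv_mul]
    rw [integrableOn_Ioi_comp_mul_left_iff (fun y : ℝ ↦ (1 + y ^ P)⁻¹) 0 (inv_pos.mpr hδ),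
      mul_zero]
    exact integrableOn_Ioi_inv_one_add_pow hP
  exact rescaled.const_mul δ⁻¹

lemma integral_Ici_layerProfile_le_pi {P : ℕ} (hP : 2 ≤ P) {δ : ℝ} (hδ : 0 < δ) :
    ∫ x in Ici (0 : ℝ), layerProfile P δ x ≤ π := by
  have scaling : ∫ x in Ioi (0 : ℝ), layerProfile P δ x = ∫ y in Ioi (0 : ℝ), (1 + y ^ P)⁻¹ := by
    simp only [layerProfile, div_eq_inv_mul]
    rw [integral_const_mul,
      integral_comp_mul_left_Ioi (fun y : ℝ ↦ (1 + y ^ P)⁻¹) 0 (inv_pos.mpr hδ)]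
    simp [hδ.ne']
  rw [integral_Ici_eq_integral_Ioi, scaling]
  exact integral_Ioi_inv_one_add_pow_le_pi hP

lemma integral_exp_neg_mul_abs_sub {m : ℝ} (hm : 0 < m) (z : ℝ) :
    ∫ x : ℝ, exp (-(m * |x - z|)) = 2 / m := by
  rw [integral_sub_right_eq_self (fun x : ℝ ↦ exp (-(m * |x|))) z,
    integral_comp_abs (f := fun t : ℝ ↦ exp (-(m * t)))]
  simp only [← neg_mul]
  rw [integral_exp_mul_Ioi (neg_lt_zero.mpr hm)]
  simp
  ring

lemma integrable_exp_neg_mul_abs_sub {m : ℝ} (hm : 0 < m) (z : ℝ) :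
    Integrable fun x : ℝ ↦ exp (-(m * |x - z|)) :=
  .of_integral_ne_zero <| by
    rw [integral_exp_neg_mul_abs_sub hm z]
    positivity

end Integrals

section Kernel

variable {a β m z x : ℝ}

lemma greenKernel_nonneg (ha : 0 ≤ a) (hx : 0 ≤ x) (hz : 0 ≤ z) : 0 ≤ greenKernel a z x := by
  have abs_sub_le : |x - z| ≤ x + z := abs_le.mpr ⟨by linarith, by linarith⟩
  unfold greenKernel
  rw [sub_nonneg]
  gcongr

lemma one_sub_exp_neg_le {t : ℝ} (ht : 0 ≤ t) : 1 - exp (-t) ≤ 2 * (t / (1 + t)) := by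
  rw [← mul_div_assoc, le_div_iff₀ (by positivity)]
  nlinarith [add_one_le_exp (-t), exp_pos (-t)]

lemma two_mul_div_one_add_two_mul_le (ha : 0 ≤ a) (hz : 0 ≤ z) :
    2 * a * z / (1 + 2 * a * z) ≤ 2 * (1 + a) * (z / (1 + z)) := by
  rw [← mul_div_assoc, div_le_div_iff₀ (by positivity) (by positivity)]
  have difference_nonneg : 0 ≤ 2 * z + 2 * a * z ^ 2 + 4 * a ^ 2 * z ^ 2 := by positivity
  linarith

lemma greenKernel_le (ha : 0 ≤ a) (hz : 0 ≤ z) (x : ℝ) :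
    greenKernel a z x ≤ 4 * (1 + a) * (z / (1 + z)) * exp (-(a * |x - z|)) := by
  have exponent_le : a * (x + z) ≤ a * |x - z| + 2 * a * z := by
    nlinarith [mul_le_mul_of_nonneg_left (le_abs_self (x - z)) ha]
  have one_sub_le : 1 - exp (-(2 * a * z)) ≤ 4 * (1 + a) * (z / (1 + z)) := by
    linarith [one_sub_exp_neg_le (t := 2 * a * z) (by positivity),
      two_mul_div_one_add_two_mul_le ha hz]
  calc greenKernel a z x
      ≤ exp (-(a * |x - z|)) - exp (-(a * |x - z| + 2 * a * z)) := by
        unfold greenKernel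
        gcongr
    _ = (1 - exp (-(2 * a * z))) * exp (-(a * |x - z|)) := by
        rw [neg_add, exp_add]
        ring
    _ ≤ 4 * (1 + a) * (z / (1 + z)) * exp (-(a * |x - z|)) := by gcongr

lemma exp_neg_mul_abs_sub_mul_exp_neg_le (h : |β| + m ≤ a) (z x : ℝ) :
    exp (-(a * |x - z|)) * exp (-(β * x)) ≤ exp (-(β * z)) * exp (-(m * |x - z|)) := by
  rw [← exp_add, ← exp_add, exp_le_exp]
  have shift_le : -(β * (x - z)) ≤ |β| * |x - z| := by
    rw [← abs_mul]
    exact neg_le_abs _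
  linarith [mul_le_mul_of_nonneg_right h (abs_nonneg (x - z))]

lemma greenKernel_mul_exp_neg_le (ha : 0 ≤ a) (h : |β| + m ≤ a) (hz : 0 ≤ z) (x : ℝ) :
    greenKernel a z x * exp (-(β * x)) ≤
      4 * (1 + a) * (z / (1 + z)) * exp (-(β * z)) * exp (-(m * |x - z|)) :=
  calc greenKernel a z x * exp (-(β * x))
      ≤ 4 * (1 + a) * (z / (1 + z)) * exp (-(a * |x - z|)) * exp (-(β * x)) := by
        gcongr
        exact greenKernel_le ha hz x
    _ = 4 * (1 + a) * (z / (1 + z)) * (exp (-(a * |x - z|)) * exp (-(β * x))) := mul_assoc ..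
    _ ≤ 4 * (1 + a) * (z / (1 + z)) * (exp (-(β * z)) * exp (-(m * |x - z|))) :=
        mul_le_mul_of_nonneg_left (exp_neg_mul_abs_sub_mul_exp_neg_le h z x) (by positivity)
    _ = 4 * (1 + a) * (z / (1 + z)) * exp (-(β * z)) * exp (-(m * |x - z|)) :=
        (mul_assoc ..).symm

end Kernel

section GreenIntegral

variable {E : Type*} [NormedAddCommGroup E] [NormedSpace ℝ E] {f : ℝ → E} {ρ : ℝ → ℝ}
  {a β m N z : ℝ}

lemma norm_greenKernel_smul_le {x r : ℝ} {y : E} (hm : 0 ≤ m) (h : |β| + m ≤ a) (hx : 0 ≤ x)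
    (hz : 0 ≤ z) (hr : 0 ≤ r) (hN : 0 ≤ N) (hy : ‖y‖ ≤ (1 + r) * exp (-(β * x)) * N) :
    ‖greenKernel a z x • y‖ ≤
      4 * (1 + a) * (z / (1 + z)) * exp (-(β * z)) * N * (exp (-(m * |x - z|)) + r) := by
  have ha : 0 ≤ a := (add_nonneg (abs_nonneg β) hm).trans h
  have hG : 0 ≤ greenKernel a z x := greenKernel_nonneg ha hx hz
  have exp_le_one : exp (-(m * |x - z|)) ≤ 1 := exp_le_one_iff.mpr (by
    simpa using mul_nonneg hm (abs_nonneg (x - z)))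
  calc ‖greenKernel a z x • y‖
      = greenKernel a z x * ‖y‖ := by rw [norm_smul, norm_of_nonneg hG]
    _ ≤ greenKernel a z x * ((1 + r) * exp (-(β * x)) * N) := by gcongr
    _ = greenKernel a z x * exp (-(β * x)) * ((1 + r) * N) := by ring
    _ ≤ 4 * (1 + a) * (z / (1 + z)) * exp (-(β * z)) * exp (-(m * |x - z|)) * ((1 + r) * N) :=
        mul_le_mul_of_nonneg_right (greenKernel_mul_exp_neg_le ha h hz x) (by positivity)
    _ = 4 * (1 + a) * (z / (1 + z)) * exp (-(β * z)) * N *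
          (exp (-(m * |x - z|)) + exp (-(m * |x - z|)) * r) := by ring
    _ ≤ 4 * (1 + a) * (z / (1 + z)) * exp (-(β * z)) * N * (exp (-(m * |x - z|)) + r) := by
        gcongr
        exact mul_le_of_le_one_left hr exp_le_one

lemma integrableOn_greenKernel_smul (hm : 0 < m) (h : |β| + m ≤ a) (hz : 0 ≤ z)
    (hρ : IntegrableOn ρ (Ici 0)) (hρ0 : ∀ x, 0 ≤ x → 0 ≤ ρ x) (hN : 0 ≤ N)
    (hfm : AEStronglyMeasurable f (volume.restrict (Ici 0)))
    (hf : ∀ x, 0 ≤ x → ‖f x‖ ≤ (1 + ρ x) * exp (-(β * x)) * N) :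
    IntegrableOn (fun x ↦ greenKernel a z x • f x) (Ici 0) := by
  have greenKernel_continuous : Continuous (greenKernel a z) := by
    unfold greenKernel
    fun_prop
  exact Integrable.mono' (((integrable_exp_neg_mul_abs_sub hm z).integrableOn.add hρ).const_mul _)
    (greenKernel_continuous.aestronglyMeasurable.smul hfm)
    (ae_restrict_of_forall_mem measurableSet_Ici fun x hx ↦
      norm_greenKernel_smul_le hm.le h hx hz (hρ0 x hx) hN (hf x hx))

lemma norm_integral_greenKernel_smul_le (hm : 0 < m) (h : |β| + m ≤ a) (hz : 0 ≤ z)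
    (hρ : IntegrableOn ρ (Ici 0)) (hρ0 : ∀ x, 0 ≤ x → 0 ≤ ρ x) (hN : 0 ≤ N)
    (hf : ∀ x, 0 ≤ x → ‖f x‖ ≤ (1 + ρ x) * exp (-(β * x)) * N) :
    ‖∫ x in Ici 0, greenKernel a z x • f x‖ ≤
      4 * (1 + a) * (z / (1 + z)) * exp (-(β * z)) * N * (2 / m + ∫ x in Ici 0, ρ x) := by
  have ha : 0 ≤ a := (add_nonneg (abs_nonneg β) hm.le).trans h
  have hexp := integrable_exp_neg_mul_abs_sub hm z
  have integral_exp_le : ∫ x in Ici 0, exp (-(m * |x - z|)) ≤ 2 / m := by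
    rw [← integral_exp_neg_mul_abs_sub hm z]
    exact setIntegral_le_integral hexp (.of_forall fun x ↦ (exp_pos _).le)
  calc ‖∫ x in Ici 0, greenKernel a z x • f x‖
      ≤ ∫ x in Ici 0, 4 * (1 + a) * (z / (1 + z)) * exp (-(β * z)) * N *
          (exp (-(m * |x - z|)) + ρ x) :=
        norm_integral_le_of_norm_le ((hexp.integrableOn.add hρ).const_mul _)
          (ae_restrict_of_forall_mem measurableSet_Ici fun x hx ↦
            norm_greenKernel_smul_le hm.le h hx hz (hρ0 x hx) hN (hf x hx))
    _ = 4 * (1 + a) * (z / (1 + z)) * exp (-(β * z)) * N *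
          ((∫ x in Ici 0, exp (-(m * |x - z|))) + ∫ x in Ici 0, ρ x) := by
        rw [integral_const_mul, integral_add hexp.integrableOn hρ]
    _ ≤ 4 * (1 + a) * (z / (1 + z)) * exp (-(β * z)) * N * (2 / m + ∫ x in Ici 0, ρ x) := by
        gcongr

end GreenIntegral

lemma norm_mul_greenSol_abs {α : ℝ} (hα : α ≠ 0) (f : ℝ → ℂ) (z : ℝ) :
    ‖(α : ℂ) * greenSol |α| f z‖ = ‖∫ x in Ici 0, greenKernel |α| z x • f x‖ / 2 := by
  have hα' : |α| ≠ 0 := abs_ne_zero.mpr hα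
  simp only [greenSol, greenKernel, Complex.real_smul, norm_mul, norm_neg, norm_div, norm_one,
    Complex.norm_real, Complex.norm_ofNat, norm_eq_abs, abs_abs]
  field_simp

theorem vertical_velocity_pointwise_bound_general {P : ℕ} (hP : 2 ≤ P) {α β m δ : ℝ}
    (hm : 0 < m) (h : |β| + m ≤ |α|) (hδ : 0 < δ) {f : ℝ → ℂ}
    (hfm : AEStronglyMeasurable f (volume.restrict (Ici 0))) (hf : blNorm P β δ 1 f < ⊤)
    {z : ℝ} (hz : 0 ≤ z) :
    IntegrableOn (fun x ↦ greenKernel |α| z x • f x) (Ici 0) ∧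
    ‖(α : ℂ) * greenSol |α| f z‖ ≤
      2 * (2 / m + π) * (1 + |α|) * (z / (1 + z)) * exp (-(β * z)) *
        (blNorm P β δ 1 f).toReal := by
  have hα : α ≠ 0 := abs_pos.mp (by linarith [abs_nonneg β])
  have hρ := integrableOn_Ici_layerProfile hP hδ
  have hρ0 : ∀ x, 0 ≤ x → 0 ≤ layerProfile P δ x := fun _ hx ↦ layerProfile_nonneg hδ hx
  have hN : 0 ≤ (blNorm P β δ 1 f).toReal := ENNReal.toReal_nonneg
  have hfx : ∀ x, 0 ≤ x → ‖f x‖ ≤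
      (1 + layerProfile P δ x) * exp (-(β * x)) * (blNorm P β δ 1 f).toReal := fun x hx ↦ by
    rw [← wt_one_eq_one_add_layerProfile (one_le_two.trans hP)]
    exact norm_le_of_blNorm_lt_top hδ hf hx
  refine ⟨integrableOn_greenKernel_smul hm h hz hρ hρ0 hN hfm hfx, ?_⟩
  rw [norm_mul_greenSol_abs hα]
  calc ‖∫ x in Ici 0, greenKernel |α| z x • f x‖ / 2
      ≤ 4 * (1 + |α|) * (z / (1 + z)) * exp (-(β * z)) * (blNorm P β δ 1 f).toReal *
          (2 / m + π) / 2 := by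
        gcongr
        refine (norm_integral_greenKernel_smul_le hm h hz hρ hρ0 hN hfx).trans ?_
        gcongr
        exact integral_Ici_layerProfile_le_pi hP hδ
    _ = _ := by ring

/-- the vanishing-at-the-boundary pointwise bound
`|αφ(z)| ≤ C(1+|α|) (z/(1+z)) e^{−βz} ‖f‖_{β,δ,1}` with `C = C(β,P)`. -/
theorem vertical_velocity_pointwise_bound (P : ℕ) (hP : 2 ≤ P)
    (β : ℝ) (hβ0 : 0 < β) (hβ : β < 1/2) :
    ∃ C : ℝ, 0 < C ∧ ∀ α : ℝ, 1 ≤ |α| → ∀ δ ∈ Set.Ioc (0:ℝ) 1, ∀ f : ℝ → ℂ,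
      ContinuousOn f (Set.Ici 0) → blNorm P β δ 1 f < ⊤ →
      ∀ z : ℝ, 0 ≤ z →
        ‖(α:ℂ) * greenSol |α| f z‖ ≤
          C * (1 + |α|) * (z / (1 + z)) * Real.exp (-(β * z)) *
            (blNorm P β δ 1 f).toReal :=
  ⟨2 * (2 / (1 / 2) + π), by positivity, fun _ hα _ hδ _ hf hN _ hz ↦
    (vertical_velocity_pointwise_bound_general hP one_half_pos
      (by linarith [abs_of_pos hβ0]) hδ.1 (hf.aestronglyMeasurable measurableSet_Ici) hN hz).2⟩
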